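/- Let k be a field of characteristic zero, A a unital commutative k-algebra, n ≥ 1, p ≥ 1, and φ : A^n → A a k-multilinear map that vanishes on (p+1)-fold shuffle products. Then the Hochschild coboundary dφ : A^{n+1} → A vanishes on (p+1)-fold shuffle products. (Hence the Hochschild differential maps the Hodge component C^{p,q}(A,A) to C^{p,q+1}(A,A).) -/

import Mathlib

/-- Insert the unit `1` at position `i` (0-indexed) into a tuple of length `n-1`. -/
def insUnit {A : Type*} [One A] {n : ℕ} (i : Fin n) (a : Fin (n-1) → A) : Fin n → A :=
  fun k =>
    if h1 : (k : ℕ) < (i : ℕ) then a ⟨k, by have := i.isLt; omega⟩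
    else if h2 : (k : ℕ) = (i : ℕ) then 1
    else a ⟨(k : ℕ) - 1, by have := k.isLt; omega⟩

/-- The differential `d' : C^n(A,A) → C^{n-1}(A,A)`, the alternating sum
`(d'φ)(a_1,…,a_{n-1}) = Σ_{j=1}^{n} (−1)^{n−j} φ(a_1,…,a_{j−1},1,a_j,…,a_{n−1})`
of insertions of the unit `1` into the arguments. -/
def dUnit {A : Type*} [Ring A] {n : ℕ} (φ : (Fin n → A) → A) : (Fin (n-1) → A) → A :=
  fun a => ∑ i : Fin n, ((-1 : ℤ) ^ (n - 1 - (i : ℕ))) • φ (insUnit i a)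

/-- The Hochschild differential `d : C^n(A,A) → C^{n+1}(A,A)`:
`(dφ)(a_1,…,a_{n+1}) = a_1·φ(a_2,…,a_{n+1}) + Σ_{i=1}^{n} (−1)^i φ(a_1,…,a_i a_{i+1},…,a_{n+1})
 + (−1)^{n+1} φ(a_1,…,a_n)·a_{n+1}`. -/
def hochschild {A : Type*} [Ring A] {n : ℕ} (φ : (Fin n → A) → A) : (Fin (n+1) → A) → A :=
  fun a =>
    a 0 * φ (fun j => a j.succ)
    + ∑ i : Fin n, ((-1 : ℤ) ^ ((i : ℕ) + 1)) • φ (fun j =>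
        if (j : ℕ) < (i : ℕ) then a j.castSucc
        else if (j : ℕ) = (i : ℕ) then a i.castSucc * a i.succ
        else a j.succ)
    + ((-1 : ℤ) ^ (n+1)) • (φ (fun j => a j.castSucc) * a (Fin.last n))

/-- The index of the block (of the composition `c`) containing the 0-indexed position `t`. -/
def blockOf (c : List ℕ) (t : ℕ) : ℕ :=
  (List.range c.length).countP (fun k => (c.take (k+1)).sum ≤ t)

/-- A permutation of `{0,…,n-1}` is a `(c_1,…,c_p)`-shuffle if it is strictly increasing
on each of the consecutive blocks of sizes `c_1,…,c_p`. -/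
def IsShuffle {n : ℕ} (c : List ℕ) (σ : Equiv.Perm (Fin n)) : Prop :=
  ∀ i j : Fin n, (i : ℕ) < (j : ℕ) → blockOf c i = blockOf c j → σ i < σ j

instance {n : ℕ} (c : List ℕ) :
    DecidablePred (fun σ : Equiv.Perm (Fin n) => IsShuffle c σ) := fun σ => by
  unfold IsShuffle; infer_instance

/-- A map `φ : A^n → A` vanishes on `p`-fold shuffle products if for every composition
`c` of `n` into `p` positive parts and all `a_1,…,a_n ∈ A` the signed sum of `φ` over all
`c`-shuffles vanishes: `Σ_σ sgn(σ) φ(a_{σ⁻¹(1)},…,a_{σ⁻¹(n)}) = 0`. -/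
def VanishesOnShuffleProducts {A : Type*} [Ring A] (p n : ℕ) (φ : (Fin n → A) → A) : Prop :=
  ∀ c : List ℕ, c.length = p → (∀ x ∈ c, 0 < x) → c.sum = n →
    ∀ a : Fin n → A,
      ∑ σ ∈ Finset.univ.filter (fun σ : Equiv.Perm (Fin n) => IsShuffle c σ),
        ((Equiv.Perm.sign σ : ℤˣ) : ℤ) • φ (fun t => a (σ.symm t)) = 0

/-!
The shuffles of the blocks of a sequence form a sum on which the Hochschild differential acts like
a derivation. An inner face multiplying neighbours from different blocks occurs in two shuffles of
opposite sign, by commutativity, so only products of neighbours inside one block survive. An outer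
face takes off the first or the last entry of a block. Every such face yields a signed shuffle sum
with the same number of blocks, on which `φ` vanishes, unless it deletes a block of size one; then
the first and the last entry of that block coincide and the two outer faces cancel.
-/

open Equiv Finset

section InsertPerm

variable {n : ℕ}

/-- The permutation of `Fin (n + 1)` sending `v` to `i` and acting as `τ` between the
complements of `v` and `i`, each identified with `Fin n` in an order-preserving way. -/
def insertPerm (v i : Fin (n + 1)) (τ : Perm (Fin n)) : Perm (Fin (n + 1)) :=
  i.cycleRange.symm * Perm.decomposeFin.symm (0, τ) * v.cycleRange

@[simp]
theorem insertPerm_apply_self (v i : Fin (n + 1)) (τ : Perm (Fin n)) :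
    insertPerm v i τ v = i := by
  simp [insertPerm]

@[simp]
theorem insertPerm_apply_succAbove (v i : Fin (n + 1)) (τ : Perm (Fin n)) (s : Fin n) :
    insertPerm v i τ (v.succAbove s) = i.succAbove (τ s) := by
  simp [insertPerm]

@[simp]
theorem insertPerm_symm_apply_self (v i : Fin (n + 1)) (τ : Perm (Fin n)) :
    (insertPerm v i τ).symm i = v := by
  simp [symm_apply_eq]

theorem removeNth_comp_insertPerm_symm {α : Type*} (a : Fin (n + 1) → α) (v i : Fin (n + 1))
    (τ : Perm (Fin n)) :
    i.removeNth (a ∘ (insertPerm v i τ).symm) = v.removeNth a ∘ τ.symm := by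
  ext s
  refine congrArg a ?_
  rw [symm_apply_eq, insertPerm_apply_succAbove, apply_symm_apply]

theorem sign_insertPerm (v i : Fin (n + 1)) (τ : Perm (Fin n)) :
    Perm.sign (insertPerm v i τ) = (-1) ^ (v + i : ℕ) * Perm.sign τ := by
  simp only [insertPerm, Perm.sign_mul, Perm.sign_symm, Fin.sign_cycleRange,
    Perm.decomposeFin.symm_sign, if_true, one_mul]
  rw [pow_add, mul_right_comm, mul_comm ((-1) ^ (i : ℕ))]

theorem insertPerm_injective (v i : Fin (n + 1)) : Function.Injective (insertPerm v i) := by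
  intro τ ρ h
  ext1 s
  simpa using congrArg (fun σ => σ (v.succAbove s)) h

theorem insertPerm_bijective (i : Fin (n + 1)) :
    Function.Bijective fun x : Fin (n + 1) × Perm (Fin n) => insertPerm x.1 i x.2 := by
  rw [Fintype.bijective_iff_injective_and_card]
  refine ⟨?_, by simp [Fintype.card_perm, Nat.factorial_succ]⟩
  rintro ⟨v, τ⟩ ⟨w, ρ⟩ (h : insertPerm v i τ = insertPerm w i ρ)
  obtain rfl : v = w := by simpa using congrArg (fun σ => σ.symm i) h
  rw [insertPerm_injective v i h]

theorem exists_insertPerm_eq (σ : Perm (Fin (n + 1))) (v : Fin (n + 1)) :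
    ∃ τ, insertPerm v (σ v) τ = σ := by
  obtain ⟨⟨w, τ⟩, h : insertPerm w (σ v) τ = σ⟩ := (insertPerm_bijective (σ v)).surjective σ
  obtain rfl : w = v := σ.injective (by rw [← insertPerm_apply_self w (σ v) τ, h])
  exact ⟨τ, h⟩

/-- The permutation of `Fin (n + 1)` obtained from `τ` by replacing `u` and its image `τ u` by
pairs of adjacent elements. -/
def doublePerm (τ : Perm (Fin n)) (u : Fin n) : Perm (Fin (n + 1)) :=
  insertPerm u.castSucc (τ u).castSucc τ

@[simp]
theorem doublePerm_apply_castSucc (τ : Perm (Fin n)) (u : Fin n) :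
    doublePerm τ u u.castSucc = (τ u).castSucc :=
  insertPerm_apply_self _ _ _

@[simp]
theorem doublePerm_apply_succ (τ : Perm (Fin n)) (u : Fin n) :
    doublePerm τ u u.succ = (τ u).succ := by
  rw [doublePerm, ← Fin.succAbove_castSucc_self u, insertPerm_apply_succAbove,
    Fin.succAbove_castSucc_self]

@[simp]
theorem doublePerm_symm_apply_castSucc (τ : Perm (Fin n)) (u : Fin n) :
    (doublePerm τ u).symm (τ u).castSucc = u.castSucc := by
  simp [symm_apply_eq]

@[simp]
theorem doublePerm_symm_apply_succ (τ : Perm (Fin n)) (u : Fin n) :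
    (doublePerm τ u).symm (τ u).succ = u.succ := by
  simp [symm_apply_eq]

theorem sign_doublePerm (τ : Perm (Fin n)) (u : Fin n) :
    Perm.sign (doublePerm τ u) = (-1) ^ (u + τ u : ℕ) * Perm.sign τ :=
  sign_insertPerm _ _ _

theorem eq_and_eq_of_doublePerm_eq {τ ρ : Perm (Fin n)} {u w : Fin n}
    (h : doublePerm τ u = doublePerm ρ w) (huw : τ u = ρ w) : u = w ∧ τ = ρ := by
  obtain rfl : u = w := Fin.castSucc_injective n <| by
    rw [← doublePerm_symm_apply_castSucc τ u, h, huw, doublePerm_symm_apply_castSucc]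
  rw [doublePerm, doublePerm, huw] at h
  exact ⟨rfl, insertPerm_injective _ _ h⟩

theorem exists_doublePerm_eq {σ : Perm (Fin (n + 1))} {u i : Fin n}
    (hcast : σ u.castSucc = i.castSucc) (hsucc : σ u.succ = i.succ) :
    ∃ τ, τ u = i ∧ doublePerm τ u = σ := by
  obtain ⟨τ, hτ⟩ := exists_insertPerm_eq σ u.castSucc
  rw [hcast] at hτ
  have hτu : τ u = i := by
    rwa [← hτ, ← Fin.succAbove_castSucc_self u, insertPerm_apply_succAbove,
      ← Fin.succAbove_castSucc_self i, Fin.succAbove_right_inj] at hsucc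
  exact ⟨τ, hτu, by rwa [doublePerm, hτu]⟩

end InsertPerm

section IsBlockShuffle

variable {n : ℕ} {ι : Type*}

/-- A shuffle of the blocks of `β`, the block of a position being its value under `β`: a
permutation that is strictly increasing on each fibre of `β`. -/
def IsBlockShuffle (β : Fin n → ι) (σ : Perm (Fin n)) : Prop :=
  ∀ x y : Fin n, x < y → β x = β y → σ x < σ y

instance [DecidableEq ι] (β : Fin n → ι) : DecidablePred (IsBlockShuffle β) := fun σ => by
  unfold IsBlockShuffle; infer_instance

theorem isBlockShuffle_insertPerm_iff (β : Fin (n + 1) → ι) (v i : Fin (n + 1))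
    (τ : Perm (Fin n)) :
    IsBlockShuffle β (insertPerm v i τ) ↔
      IsBlockShuffle (v.removeNth β) τ ∧
      (∀ s, s.castSucc < v → v.removeNth β s = β v → (τ s).castSucc < i) ∧
      (∀ s, v ≤ s.castSucc → v.removeNth β s = β v → i ≤ (τ s).castSucc) := by
  simp only [IsBlockShuffle, v.forall_iff_succAbove, insertPerm_apply_self,
    insertPerm_apply_succAbove, lt_irrefl, false_imp_iff, true_and, forall_and,
    Fin.succAbove_lt_succAbove_iff, Fin.succAbove_lt_iff_castSucc_lt,
    Fin.lt_succAbove_iff_le_castSucc, Fin.removeNth_apply, eq_comm (a := β v)]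
  tauto

theorem isBlockShuffle_insertPerm_zero_iff (β : Fin (n + 1) → ι) (v : Fin (n + 1))
    (τ : Perm (Fin n)) :
    IsBlockShuffle β (insertPerm v 0 τ) ↔
      IsBlockShuffle (v.removeNth β) τ ∧ ∀ w < v, β w ≠ β v := by
  rw [isBlockShuffle_insertPerm_iff, v.forall_iff_succAbove]
  simp [Fin.succAbove_lt_iff_castSucc_lt, Fin.removeNth_apply]

theorem isBlockShuffle_insertPerm_last_iff (β : Fin (n + 1) → ι) (v : Fin (n + 1))
    (τ : Perm (Fin n)) :
    IsBlockShuffle β (insertPerm v (Fin.last n) τ) ↔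
      IsBlockShuffle (v.removeNth β) τ ∧ ∀ w > v, β w ≠ β v := by
  rw [isBlockShuffle_insertPerm_iff, v.forall_iff_succAbove]
  simp [Fin.lt_succAbove_iff_le_castSucc, Fin.removeNth_apply, Fin.castSucc_lt_last]

theorem isBlockShuffle_doublePerm_iff {β : Fin (n + 1) → ι} {u : Fin n}
    (hu : β u.castSucc = β u.succ) (τ : Perm (Fin n)) :
    IsBlockShuffle β (doublePerm τ u) ↔ IsBlockShuffle (u.castSucc.removeNth β) τ := by
  have hβu : u.castSucc.removeNth β u = β u.castSucc := by
    rw [Fin.removeNth_apply, Fin.succAbove_castSucc_self, hu]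
  rw [doublePerm, isBlockShuffle_insertPerm_iff, ← hβu]
  simp only [Fin.castSucc_lt_castSucc_iff, Fin.castSucc_le_castSucc_iff]
  refine ⟨And.left, fun h => ⟨h, fun s => h s u, fun s hs hβs => ?_⟩⟩
  obtain rfl | hlt := hs.eq_or_lt
  · exact le_rfl
  · exact (h u s hlt hβs.symm).le

theorem IsBlockShuffle.covBy_of_apply_covBy [PartialOrder ι] {β : Fin n → ι} (hβ : Monotone β)
    {σ : Perm (Fin n)} (hσ : IsBlockShuffle β σ) {x y : Fin n} (hxy : β x = β y)
    (hcov : σ x ⋖ σ y) : x ⋖ y := by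
  have hlt : x < y := by
    refine lt_of_not_ge fun hle => ?_
    obtain rfl | hlt := hle.eq_or_lt
    · exact lt_irrefl _ hcov.lt
    · exact (hσ y x hlt hxy.symm).not_gt hcov.lt
  refine ⟨hlt, fun w hxw hwy => ?_⟩
  have hβw : β w = β x := le_antisymm (hxy ▸ hβ hwy.le) (hβ hxw.le)
  exact hcov.2 (hσ x w hxw hβw.symm) (hσ w y hwy (hβw.trans hxy))

theorem IsBlockShuffle.exists_doublePerm [PartialOrder ι] {β : Fin (n + 1) → ι}
    (hβ : Monotone β) {σ : Perm (Fin (n + 1))} (hσ : IsBlockShuffle β σ) {i : Fin n}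
    (hi : β (σ.symm i.castSucc) = β (σ.symm i.succ)) :
    ∃ u τ, τ u = i ∧ doublePerm τ u = σ := by
  have hcov : σ.symm i.castSucc ⋖ σ.symm i.succ := hσ.covBy_of_apply_covBy hβ hi (by simp)
  have hlt := hcov.lt
  obtain ⟨u, hu⟩ := Fin.exists_castSucc_eq.2 (Fin.ne_last_of_lt hlt)
  have hsucc : u.succ = σ.symm i.succ := by
    rw [← hu, Fin.covBy_iff, Order.covBy_iff_add_one_eq] at hcov
    exact Fin.ext hcov
  exact ⟨u, exists_doublePerm_eq (by rw [hu, apply_symm_apply])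
    (by rw [hsucc, apply_symm_apply])⟩

theorem swap_lt_swap_of_covBy {α : Type*} [LinearOrder α] {s t x y : α} (hst : s ⋖ t)
    (hxy : x < y) (hne : ¬ (x = s ∧ y = t)) : swap s t x < swap s t y := by
  have hs : s < x → t ≤ x := fun h => le_of_not_gt (hst.2 h)
  have ht : s < y → t ≤ y := fun h => le_of_not_gt (hst.2 h)
  have hlt := hst.lt
  simp only [swap_apply_def]
  grind

theorem IsBlockShuffle.swap_mul {β : Fin n → ι} {σ : Perm (Fin n)} (hσ : IsBlockShuffle β σ)
    {s t : Fin n} (hst : s ⋖ t) (hne : β (σ.symm s) ≠ β (σ.symm t)) :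
    IsBlockShuffle β (swap s t * σ) := by
  intro x y hxy hβ
  refine swap_lt_swap_of_covBy hst (hσ x y hxy hβ) ?_
  rintro ⟨rfl, rfl⟩
  simp [hβ] at hne

end IsBlockShuffle

section ContractNth

variable {n : ℕ} {α : Type*}

theorem contractNth_mul_comp_swap [CommMagma α] (i : Fin n) (a : Fin (n + 1) → α) :
    i.castSucc.contractNth (· * ·) (a ∘ swap i.castSucc i.succ) =
      i.castSucc.contractNth (· * ·) a := by
  ext j
  obtain rfl | hne := eq_or_ne i j
  · simp [Fin.contractNth_apply_of_eq, mul_comm]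
  · have hval : (i.castSucc : ℕ) ≠ j := by simpa [Fin.ext_iff] using hne
    have hsucc : i.castSucc.succAbove j ≠ i.succ := by
      rw [← Fin.succAbove_castSucc_self]
      exact Fin.succAbove_right_injective.ne hne.symm
    rw [Fin.contractNth_apply_of_ne _ _ _ _ hval, Fin.contractNth_apply_of_ne _ _ _ _ hval,
      Function.comp_apply, swap_apply_of_ne_of_ne (Fin.succAbove_ne _ _) hsucc]

theorem contractNth_comp_doublePerm_symm (op : α → α → α) (τ : Perm (Fin n)) (u : Fin n)
    (a : Fin (n + 1) → α) :
    (τ u).castSucc.contractNth op (a ∘ (doublePerm τ u).symm) =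
      u.castSucc.contractNth op a ∘ τ.symm := by
  ext j
  obtain ⟨s, rfl⟩ := τ.surjective j
  rw [Function.comp_apply, symm_apply_apply]
  obtain rfl | hne := eq_or_ne u s
  · simp [Fin.contractNth_apply_of_eq]
  · have hval : (u.castSucc : ℕ) ≠ s := by simpa [Fin.ext_iff] using hne
    have hval' : ((τ u).castSucc : ℕ) ≠ τ s := by simpa [← Fin.ext_iff] using hne
    rw [Fin.contractNth_apply_of_ne _ _ _ _ hval, Fin.contractNth_apply_of_ne _ _ _ _ hval']
    refine (congrFun (removeNth_comp_insertPerm_symm a u.castSucc _ τ) (τ s)).trans ?_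
    rw [Function.comp_apply, symm_apply_apply, Fin.removeNth_apply]

end ContractNth

section ShuffleSum

variable {n : ℕ} {ι α M : Type*} [DecidableEq ι] [AddCommGroup M]

/-- The value of `φ` on the signed shuffle product of the blocks of `a` cut out by `β`. -/
def shuffleSum (β : Fin n → ι) (φ : (Fin n → α) → M) (a : Fin n → α) : M :=
  ∑ σ with IsBlockShuffle β σ, Perm.sign σ • φ (a ∘ σ.symm)

theorem shuffleSum_add (β : Fin n → ι) (φ ψ : (Fin n → α) → M) (a : Fin n → α) :
    shuffleSum β (fun b => φ b + ψ b) a = shuffleSum β φ a + shuffleSum β ψ a := by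
  simp only [shuffleSum, smul_add, sum_add_distrib]

theorem shuffleSum_sum {κ : Type*} (s : Finset κ) (β : Fin n → ι) (φ : κ → (Fin n → α) → M)
    (a : Fin n → α) :
    shuffleSum β (fun b => ∑ i ∈ s, φ i b) a = ∑ i ∈ s, shuffleSum β (φ i) a := by
  simp only [shuffleSum, smul_sum]
  exact sum_comm

theorem shuffleSum_units_smul (ε : ℤˣ) (β : Fin n → ι) (φ : (Fin n → α) → M) (a : Fin n → α) :
    shuffleSum β (fun b => ε • φ b) a = ε • shuffleSum β φ a := by
  simp only [shuffleSum, smul_sum, smul_comm ε]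

theorem shuffleSum_const_mul {R : Type*} [Ring R] (r : R) (β : Fin n → ι) (φ : (Fin n → α) → R)
    (a : Fin n → α) :
    shuffleSum β (fun b => r * φ b) a = r * shuffleSum β φ a := by
  simp only [shuffleSum, mul_sum, mul_smul_comm]

theorem shuffleSum_removeNth {β : Fin (n + 1) → ι} (i : Fin (n + 1)) (P : Fin (n + 1) → Prop)
    [DecidablePred P]
    (hP : ∀ v τ, IsBlockShuffle β (insertPerm v i τ) ↔ IsBlockShuffle (v.removeNth β) τ ∧ P v)
    (ψ : α → (Fin n → α) → M) (a : Fin (n + 1) → α) :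
    shuffleSum β (fun b => ψ (b i) (i.removeNth b)) a =
      ∑ v with P v,
        (-1 : ℤˣ) ^ (v + i : ℕ) • shuffleSum (v.removeNth β) (ψ (a v)) (v.removeNth a) := by
  rw [shuffleSum, sum_filter, ← (insertPerm_bijective i).sum_comp, Fintype.sum_prod_type,
    sum_filter]
  refine sum_congr rfl fun v _ => ?_
  simp only [hP, sign_insertPerm, removeNth_comp_insertPerm_symm, Function.comp_apply,
    insertPerm_symm_apply_self]
  split_ifs with hv
  · simp only [hv, and_true, ← sum_filter, shuffleSum, smul_sum, mul_smul]
  · simp [hv]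

theorem shuffleSum_tail (β : Fin (n + 1) → ι) (ψ : α → (Fin n → α) → M) (a : Fin (n + 1) → α) :
    shuffleSum β (fun b => ψ (b 0) (Fin.tail b)) a =
      ∑ v with ∀ w < v, β w ≠ β v,
        (-1 : ℤˣ) ^ (v : ℕ) • shuffleSum (v.removeNth β) (ψ (a v)) (v.removeNth a) := by
  simpa only [Fin.removeNth_zero, Fin.val_zero, add_zero] using
    shuffleSum_removeNth 0 _ (isBlockShuffle_insertPerm_zero_iff β) ψ a

theorem shuffleSum_init (β : Fin (n + 1) → ι) (ψ : α → (Fin n → α) → M) (a : Fin (n + 1) → α) :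
    shuffleSum β (fun b => ψ (b (Fin.last n)) (Fin.init b)) a =
      ∑ v with ∀ w > v, β w ≠ β v,
        (-1 : ℤˣ) ^ (v + n : ℕ) • shuffleSum (v.removeNth β) (ψ (a v)) (v.removeNth a) := by
  simpa only [Fin.removeNth_last, Fin.val_last] using
    shuffleSum_removeNth (Fin.last n) _ (isBlockShuffle_insertPerm_last_iff β) ψ a

theorem sum_contractNth_of_ne_eq_zero [CommMagma α] (β : Fin (n + 1) → ι)
    (φ : (Fin n → α) → M) (a : Fin (n + 1) → α) (i : Fin n) :
    ∑ σ with IsBlockShuffle β σ ∧ β (σ.symm i.castSucc) ≠ β (σ.symm i.succ),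
      Perm.sign σ • φ (i.castSucc.contractNth (· * ·) (a ∘ σ.symm)) = 0 := by
  -- Exchanging the two multiplied entries changes the sign of the shuffle, but not the product.
  have hcov : i.castSucc ⋖ i.succ := by simp
  refine sum_involution (fun σ _ => swap i.castSucc i.succ * σ) ?_ ?_ ?_ ?_
  · intro σ _
    have hcomp : a ∘ (swap i.castSucc i.succ * σ).symm =
      (a ∘ σ.symm) ∘ swap i.castSucc i.succ := rfl
    rw [hcomp, contractNth_mul_comp_swap, Perm.sign_mul, Perm.sign_swap hcov.ne, neg_one_mul,
      Units.neg_smul, add_neg_cancel]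
  · intro σ _ _ h
    exact hcov.ne (swap_eq_one_iff.1 (mul_eq_right.1 h))
  · intro σ hσ
    simp only [mem_filter, mem_univ, true_and] at hσ ⊢
    exact ⟨hσ.1.swap_mul hcov hσ.2, by simpa [← Perm.inv_def, mul_inv_rev] using hσ.2.symm⟩
  · intro σ _
    simp [← mul_assoc]

theorem shuffleSum_contractNth [CommMagma α] (β : Fin (n + 1) → ι) (φ : (Fin n → α) → M)
    (a : Fin (n + 1) → α) (i : Fin n) :
    shuffleSum β (fun b => φ (i.castSucc.contractNth (· * ·) b)) a =
      ∑ σ with IsBlockShuffle β σ ∧ β (σ.symm i.castSucc) = β (σ.symm i.succ),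
        Perm.sign σ • φ (i.castSucc.contractNth (· * ·) (a ∘ σ.symm)) := by
  rw [shuffleSum, ← sum_filter_add_sum_filter_not _
    fun σ : Perm (Fin (n + 1)) => β (σ.symm i.castSucc) = β (σ.symm i.succ)]
  simp only [filter_filter]
  rw [sum_contractNth_of_ne_eq_zero, add_zero]

theorem sum_shuffleSum_contractNth [PartialOrder ι] [CommMagma α] {β : Fin (n + 1) → ι}
    (hβ : Monotone β) (φ : (Fin n → α) → M) (a : Fin (n + 1) → α) :
    ∑ i : Fin n, (-1 : ℤˣ) ^ (i + 1 : ℕ) •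
        shuffleSum β (fun b => φ (i.castSucc.contractNth (· * ·) b)) a =
      ∑ u : Fin n with β u.castSucc = β u.succ, (-1 : ℤˣ) ^ (u + 1 : ℕ) •
        shuffleSum (u.castSucc.removeNth β) φ (u.castSucc.contractNth (· * ·) a) := by
  simp only [shuffleSum_contractNth]
  simp only [shuffleSum, smul_sum, sum_sigma']
  symm
  refine sum_bij (fun x _ => ⟨x.2 x.1, doublePerm x.2 x.1⟩) ?_ ?_ ?_ ?_
  · rintro ⟨u, τ⟩ hx
    simp only [mem_sigma, mem_filter, mem_univ, true_and] at hx
    simpa [isBlockShuffle_doublePerm_iff hx.1] using hx.symm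
  · rintro ⟨u, τ⟩ - ⟨w, ρ⟩ - h
    simp only [Sigma.mk.injEq, heq_eq_eq] at h ⊢
    exact eq_and_eq_of_doublePerm_eq h.2 h.1
  · rintro ⟨i, σ⟩ hx
    simp only [mem_sigma, mem_filter, mem_univ, true_and] at hx
    obtain ⟨u, τ, rfl, rfl⟩ := hx.1.exists_doublePerm hβ hx.2
    rw [doublePerm_symm_apply_castSucc, doublePerm_symm_apply_succ] at hx
    exact ⟨⟨u, τ⟩, by simpa [hx.2] using (isBlockShuffle_doublePerm_iff hx.2 τ).1 hx.1, rfl⟩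
  · rintro ⟨u, τ⟩ -
    have hsign : (-1 : ℤˣ) ^ (τ u + 1 : ℕ) * Perm.sign (doublePerm τ u) =
        (-1) ^ (u + 1 : ℕ) * Perm.sign τ := by
      rw [sign_doublePerm, ← mul_assoc, ← pow_add]
      congr 1
      rw [show (τ u + 1 + (u + τ u) : ℕ) = u + 1 + 2 * τ u by ring, pow_add, pow_mul]
      simp
    rw [smul_smul, smul_smul, hsign, contractNth_comp_doublePerm_symm]

end ShuffleSum

section Hochschild

variable {A : Type*} {n : ℕ} {ι : Type*}

theorem hochschild_eq_tail_add_sum_contractNth_add_init [Ring A] (φ : (Fin n → A) → A)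
    (a : Fin (n + 1) → A) :
    hochschild φ a = a 0 * φ (Fin.tail a)
      + ∑ i : Fin n, (-1 : ℤˣ) ^ (i + 1 : ℕ) • φ (i.castSucc.contractNth (· * ·) a)
      + (-1 : ℤˣ) ^ (n + 1) • (φ (Fin.init a) * a (Fin.last n)) := by
  have hface : ∀ i : Fin n, (fun j : Fin n => if (j : ℕ) < i then a j.castSucc
      else if (j : ℕ) = i then a i.castSucc * a i.succ else a j.succ) =
      i.castSucc.contractNth (· * ·) a := fun i => by
    ext j
    simp only [Fin.contractNth, Fin.val_castSucc]
    grind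
  simp only [hochschild, hface, Units.smul_def, Units.val_pow_eq_pow_val, Units.val_neg,
    Units.val_one]
  rfl

theorem surjective_removeNth {β : Fin (n + 1) → ι} (hβ : Function.Surjective β)
    {v w : Fin (n + 1)} (hne : w ≠ v) (hw : β w = β v) :
    Function.Surjective (v.removeNth β) := by
  intro j
  obtain ⟨y, hyv, rfl⟩ : ∃ y ≠ v, β y = j := by
    obtain ⟨y, rfl⟩ := hβ j
    obtain rfl | hy := eq_or_ne y v
    · exact ⟨w, hne, hw⟩
    · exact ⟨y, hy, rfl⟩
  obtain ⟨z, rfl⟩ := Fin.exists_succAbove_eq hyv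
  exact ⟨z, rfl⟩

variable [DecidableEq ι] [PartialOrder ι]

theorem shuffleSum_hochschild [CommRing A] {β : Fin (n + 1) → ι} (hβ : Monotone β)
    (φ : (Fin n → A) → A) (a : Fin (n + 1) → A) :
    shuffleSum β (hochschild φ) a =
      (∑ v with ∀ w < v, β w ≠ β v,
        (-1 : ℤˣ) ^ (v : ℕ) • (a v * shuffleSum (v.removeNth β) φ (v.removeNth a)))
      + (∑ u : Fin n with β u.castSucc = β u.succ, (-1 : ℤˣ) ^ (u + 1 : ℕ) •
        shuffleSum (u.castSucc.removeNth β) φ (u.castSucc.contractNth (· * ·) a))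
      - ∑ v with ∀ w > v, β w ≠ β v,
        (-1 : ℤˣ) ^ (v : ℕ) • (a v * shuffleSum (v.removeNth β) φ (v.removeNth a)) := by
  have hsign : ∀ v : ℕ, (-1 : ℤˣ) ^ (n + 1) * (-1) ^ (v + n) = -(-1) ^ v := fun v => by
    rw [← pow_add, show n + 1 + (v + n) = v + 1 + 2 * n by ring, pow_add, pow_mul]
    simp [pow_succ]
  have htail := shuffleSum_tail β (fun x b => x * φ b) a
  have hinit := shuffleSum_init β (fun x b => x * φ b) a
  simp only [shuffleSum_const_mul] at htail hinit
  rw [funext (hochschild_eq_tail_add_sum_contractNth_add_init φ), shuffleSum_add, shuffleSum_add,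
    shuffleSum_sum, shuffleSum_units_smul]
  simp only [shuffleSum_units_smul, mul_comm (φ _)]
  rw [htail, hinit, sum_shuffleSum_contractNth hβ, sub_eq_add_neg, smul_sum, ← sum_neg_distrib]
  simp only [smul_smul, hsign, Units.neg_smul]

theorem shuffleSum_hochschild_eq_zero [CommRing A] {φ : (Fin n → A) → A}
    (hφ : ∀ β : Fin n → ι, Monotone β → Function.Surjective β → ∀ a, shuffleSum β φ a = 0)
    {β : Fin (n + 1) → ι} (hβ : Monotone β) (hsurj : Function.Surjective β)
    (a : Fin (n + 1) → A) :
    shuffleSum β (hochschild φ) a = 0 := by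
  have hremove : ∀ {v w}, w ≠ v → β w = β v → ∀ b, shuffleSum (v.removeNth β) φ b = 0 :=
    fun {v _} hne hw => hφ _ (hβ.comp (Fin.strictMono_succAbove v).monotone)
      (surjective_removeNth hsurj hne hw)
  have hsingleton : ∀ v b, shuffleSum (v.removeNth β) φ b ≠ 0 →
      ((∀ w < v, β w ≠ β v) ↔ ∀ w > v, β w ≠ β v) := fun v b hb =>
    iff_of_true (fun w hw hβw => hb (hremove hw.ne hβw b))
      (fun w hw hβw => hb (hremove hw.ne' hβw b))
  have hinner_sum : ∑ u : Fin n with β u.castSucc = β u.succ, (-1 : ℤˣ) ^ (u + 1 : ℕ) •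
      shuffleSum (u.castSucc.removeNth β) φ (u.castSucc.contractNth (· * ·) a) = 0 :=
    sum_eq_zero fun u hu => by
      rw [hremove u.castSucc_lt_succ.ne' (mem_filter.1 hu).2.symm, smul_zero]
  rw [shuffleSum_hochschild hβ, hinner_sum, add_zero, sub_eq_zero, sum_filter, sum_filter]
  refine sum_congr rfl fun v _ => ?_
  by_cases hb : shuffleSum (v.removeNth β) φ (v.removeNth a) = 0
  · simp [hb]
  · simp only [hsingleton v _ hb]

end Hochschild

section Compositions

variable {n q : ℕ}

theorem blockOf_eq_of_forall {c : List ℕ} {t b : ℕ} (hb : b ≤ c.length)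
    (h : ∀ k < c.length, (c.take (k + 1)).sum ≤ t ↔ k < b) : blockOf c t = b := by
  have hrange : (range c.length).filter (fun k => (c.take (k + 1)).sum ≤ t) = range b := by
    ext k
    grind
  rw [← card_range b, ← hrange]
  exact List.countP_eq_length_filter

theorem blockOf_blocks (c : Composition n) (t : Fin n) : blockOf c.blocks t = c.index t := by
  refine blockOf_eq_of_forall (c.index t).is_lt.le fun k _ => ⟨fun h => ?_, fun h => ?_⟩
  · exact lt_of_not_ge fun hle => ((c.lt_sizeUpTo_index_succ t).trans_le
      (c.monotone_sizeUpTo (Nat.succ_le_succ hle))).not_ge h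
  · exact (c.monotone_sizeUpTo h).trans (c.sizeUpTo_index_le t)

theorem monotone_composition_index (c : Composition n) : Monotone c.index := by
  intro s t hst
  refine le_of_not_gt fun hlt => hst.not_gt ?_
  exact Fin.lt_def.2 <| (c.lt_sizeUpTo_index_succ t).trans_le <|
    (c.monotone_sizeUpTo (Nat.succ_le_of_lt hlt)).trans (c.sizeUpTo_index_le s)

theorem sum_take_ofFn_card_fiber (β : Fin n → Fin q) (k : ℕ) :
    ((List.ofFn fun j => #{s | β s = j}).take k).sum = #{s | (β s : ℕ) < k} := by
  rw [List.sum_take_ofFn, card_eq_sum_card_fiberwise (f := β) (t := {j | (j : ℕ) < k})]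
  · refine sum_congr rfl fun j hj => congrArg card ?_
    ext s
    grind
  · intro s hs
    simpa using hs

theorem blockOf_ofFn_card_fiber {β : Fin n → Fin q} (hβ : Monotone β) (t : Fin n) :
    blockOf (List.ofFn fun j => #{s | β s = j}) t = β t := by
  have hval : Monotone fun s => (β s : ℕ) := hβ
  refine blockOf_eq_of_forall (by simp) fun k _ => ?_
  rw [sum_take_ofFn_card_fiber, ← not_lt, Tuple.lt_card_lt_iff_apply_lt_of_monotone hval]
  omega

theorem sum_isShuffle_eq_shuffleSum {A : Type*} [Ring A] {c : List ℕ} {β : Fin n → Fin q}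
    (hβ : ∀ t : Fin n, blockOf c t = β t) (φ : (Fin n → A) → A) (a : Fin n → A) :
    ∑ σ ∈ univ.filter (fun σ : Perm (Fin n) => IsShuffle c σ),
      ((Perm.sign σ : ℤˣ) : ℤ) • φ (fun t => a (σ.symm t)) = shuffleSum β φ a := by
  have hiff : ∀ σ, IsShuffle c σ ↔ IsBlockShuffle β σ := fun σ => by
    simp only [IsShuffle, IsBlockShuffle, hβ, Fin.val_fin_lt, Fin.val_inj]
  simp only [hiff]
  rfl

theorem vanishesOnShuffleProducts_iff {A : Type*} [Ring A] {φ : (Fin n → A) → A} :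
    VanishesOnShuffleProducts q n φ ↔
      ∀ β : Fin n → Fin q, Monotone β → Function.Surjective β → ∀ a, shuffleSum β φ a = 0 := by
  constructor
  · intro h β hβ hsurj a
    rw [← sum_isShuffle_eq_shuffleSum (blockOf_ofFn_card_fiber hβ)]
    refine h _ (by simp) (fun x hx => ?_) ?_ a
    · obtain ⟨j, rfl⟩ := (List.mem_ofFn' _ _).1 hx
      obtain ⟨s, hs⟩ := hsurj j
      exact card_pos.2 ⟨s, by simpa using hs⟩
    · simpa [List.take_of_length_le] using sum_take_ofFn_card_fiber β q
  · rintro h c rfl hpos hsum a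
    let comp : Composition n := ⟨c, @hpos, hsum⟩
    rw [sum_isShuffle_eq_shuffleSum (β := comp.index) (blockOf_blocks comp)]
    refine h _ (monotone_composition_index comp)
      (fun j => ⟨comp.embedding j ⟨0, comp.blocks_pos' j j.2⟩, ?_⟩) a
    exact comp.index_embedding _ _

end Compositions

theorem hochschild_vanishesOnShuffleProducts_general {A : Type*} [CommRing A] {n q : ℕ}
    {φ : (Fin n → A) → A} (hφ : VanishesOnShuffleProducts q n φ) :
    VanishesOnShuffleProducts q (n + 1) (hochschild φ) := by
  rw [vanishesOnShuffleProducts_iff] at hφ ⊢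
  exact fun _ => shuffleSum_hochschild_eq_zero hφ

/-- over a field `k` of characteristic zero, for a unital commutative
`k`-algebra `A`, `n ≥ 1`, `p ≥ 1`, and a `k`-multilinear map `φ : A^n → A` vanishing on
`(p+1)`-fold shuffle products, the Hochschild coboundary `dφ : A^{n+1} → A` also vanishes
on `(p+1)`-fold shuffle products. -/
theorem hochschild_vanishesOnShuffleProducts {k A : Type*} [Field k] [CharZero k]
    [CommRing A] [Algebra k A]
    (n p : ℕ) (hn : 1 ≤ n) (hp : 1 ≤ p)
    (φ : MultilinearMap k (fun _ : Fin n => A) A)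
    (hφ : VanishesOnShuffleProducts (p+1) n (⇑φ)) :
    VanishesOnShuffleProducts (p+1) (n+1) (hochschild (⇑φ)) :=
  hochschild_vanishesOnShuffleProducts_general hφ
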